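/- arXiv:0905.4391 — 2 statements merged into one kernel-verified Lean document; each statement's English description precedes it below -/
import Mathlib

section
/- Let G be a finite connected simple graph with distinguished vertices v_in ≠ v_out such that G − v_out is connected, and suppose that the equation τ_ρ = r is solvable on G for every r ∈ Ψ(G). Let G′ be the graph obtained from G by attaching a new vertex v′ of degree 1 adjacent only to a vertex v ∈ V with v ≠ v_out, let α ∈ ℝ, and define r′ : V(G′) → ℝ by r′(w) = r(w) for w ∈ V and r′(v′) = α. If r′ ∈ Ψ(G′), then the equation τ_{ρ′} = r′ is solvable on G′. -/
open scoped Classical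

noncomputable section

/-- The trace of a walk: the number of occurrences of each vertex along the walk,
viewed as a vector in `ℝ^V`. -/
def trace {V : Type*} [DecidableEq V] {G : SimpleGraph V} {u v : V} (ω : G.Walk u v) : V → ℝ :=
  fun x => (ω.support.count x : ℝ)

/-- A walk from `vin` to `vout` is proper if it visits `vout` exactly once
(namely as its final vertex). -/
def IsProper {V : Type*} [DecidableEq V] {G : SimpleGraph V} {vin vout : V}
    (ω : G.Walk vin vout) : Prop :=
  ω.support.count vout = 1

/-- The set of traces of proper walks from `vin` to `vout`, as vectors in `ℝ^V`. -/
def traceSet {V : Type*} [DecidableEq V] (G : SimpleGraph V) (vin vout : V) : Set (V → ℝ) :=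
  {f | ∃ ω : G.Walk vin vout, IsProper ω ∧ f = trace ω}

/-- `Ψ(G)`: the relative interior (interior with respect to the affine span) of the convex
hull of the traces of proper walks from `vin` to `vout`. -/
def Psi {V : Type*} [Fintype V] [DecidableEq V] (G : SimpleGraph V) (vin vout : V) :
    Set (V → ℝ) :=
  intrinsicInterior ℝ (convexHull ℝ (traceSet G vin vout))

/-- The matrix `M_β` associated to a graph `G` with distinguished vertices `vin, vout`
and vertex weights `β`. -/
def Mmat {V : Type*} [Fintype V] [DecidableEq V] (G : SimpleGraph V) (vin vout : V)
    (β : V → ℝ) : Matrix V V ℝ :=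
  fun v w =>
    if (v = vout ∧ w = vout) ∨ (v = vin ∧ w = vout) then 1
    else if G.Adj v w ∧ v ≠ vout ∧ w ≠ vout then
      β v / ∑ u ∈ Finset.univ.filter (fun u => G.Adj u w), β u
    else 0

/-- The equation `τ_ρ = r` is solvable on `G`: there is a positive vertex-weight function `β`
with `M_β r = r` and `r(vout) = 1`. -/
def Solvable {V : Type*} [Fintype V] [DecidableEq V] (G : SimpleGraph V) (vin vout : V)
    (r : V → ℝ) : Prop :=
  ∃ β : V → ℝ, (∀ v, 0 < β v) ∧ (Mmat G vin vout β).mulVec r = r ∧ r vout = 1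

/-- The graph obtained from `G` by attaching a new pendant vertex (represented by `none`)
of degree 1, adjacent only to `v`. -/
def attachPendant {V : Type*} (G : SimpleGraph V) (v : V) : SimpleGraph (Option V) :=
  SimpleGraph.fromRel (fun a b =>
    (∃ x y, a = some x ∧ b = some y ∧ G.Adj x y) ∨ (a = none ∧ b = some v))

section RelInt

variable {E : Type*} [NormedAddCommGroup E] [NormedSpace ℝ E]

theorem mem_relint_iff (C : Set E) (x : E) :
    x ∈ intrinsicInterior ℝ C ↔ x ∈ affineSpan ℝ C ∧
      ∃ δ > 0, ∀ y ∈ affineSpan ℝ C, dist y x < δ → y ∈ C := by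
  rw [mem_intrinsicInterior]
  constructor
  · rintro ⟨y, hy, rfl⟩
    refine ⟨y.2, ?_⟩
    rw [mem_interior_iff_mem_nhds, Metric.mem_nhds_iff] at hy
    obtain ⟨δ, hδ, hb⟩ := hy
    refine ⟨δ, hδ, fun z hz hd => ?_⟩
    have : (⟨z, hz⟩ : affineSpan ℝ C) ∈ Metric.ball y δ := by
      rw [Metric.mem_ball]; exact hd
    exact hb this
  · rintro ⟨hx, δ, hδ, hb⟩
    refine ⟨⟨x, hx⟩, ?_, rfl⟩
    rw [mem_interior_iff_mem_nhds, Metric.mem_nhds_iff]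
    refine ⟨δ, hδ, fun z hz => ?_⟩
    exact hb z z.2 hz

theorem relint_extend {C : Set E} {x y : E} (hx : x ∈ intrinsicInterior ℝ C) (hy : y ∈ C) :
    ∃ ε > (0 : ℝ), x + ε • (x - y) ∈ C := by
  rw [mem_relint_iff] at hx
  obtain ⟨hx, δ, hδ, hb⟩ := hx
  have hn : 0 < ‖x - y‖ + 1 := by positivity
  refine ⟨δ / (‖x - y‖ + 1), by positivity, hb _ ?_ ?_⟩
  · have := AffineMap.lineMap_mem (-(δ / (‖x - y‖ + 1))) hx (subset_affineSpan ℝ C hy)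
    convert this using 1
    rw [AffineMap.lineMap_apply]
    simp only [vsub_eq_sub, vadd_eq_add]
    module
  · rw [dist_eq_norm, add_sub_cancel_left, norm_smul, Real.norm_of_nonneg (by positivity),
      div_mul_eq_mul_div, div_lt_iff₀ hn]
    nlinarith

theorem relint_of_extend [FiniteDimensional ℝ E] {C : Set E} (hC : Convex ℝ C) {x : E}
    (hx : x ∈ C)
    (h : ∀ y ∈ C, ∃ ε > (0 : ℝ), x + ε • (x - y) ∈ C) : x ∈ intrinsicInterior ℝ C := by
  obtain ⟨z₀, hz₀⟩ := Set.Nonempty.intrinsicInterior hC ⟨x, hx⟩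
  obtain ⟨ε, hε, hz⟩ := h z₀ (intrinsicInterior_subset hz₀)
  set z := x + ε • (x - z₀) with hzdef
  rw [mem_relint_iff] at hz₀ ⊢
  obtain ⟨-, δ, hδ, hb⟩ := hz₀
  refine ⟨subset_affineSpan ℝ C hx, ε / (1 + ε) * δ, by positivity, fun w hw hd => ?_⟩
  have hy : AffineMap.lineMap z w ((1 + ε) / ε) ∈ C := by
    apply hb
    · exact AffineMap.lineMap_mem _ (subset_affineSpan ℝ C hz) hw
    · have : AffineMap.lineMap z w ((1 + ε) / ε) - z₀ = ((1 + ε) / ε) • (w - x) := by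
        rw [AffineMap.lineMap_apply]
        simp only [vsub_eq_sub, vadd_eq_add, hzdef]
        match_scalars <;> field_simp <;> ring
      rw [dist_eq_norm] at hd ⊢
      rw [this, norm_smul, Real.norm_of_nonneg (by positivity)]
      calc (1 + ε) / ε * ‖w - x‖ < (1 + ε) / ε * (ε / (1 + ε) * δ) := by gcongr
        _ = δ := by field_simp
  have := hC hz hy (a := 1 / (1 + ε)) (b := ε / (1 + ε)) (by positivity) (by positivity)
    (by field_simp)
  convert this using 1
  rw [AffineMap.lineMap_apply]
  simp only [vsub_eq_sub, vadd_eq_add]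
  match_scalars <;> field_simp <;> ring

theorem relint_image {F : Type*} [NormedAddCommGroup F] [NormedSpace ℝ F]
    [FiniteDimensional ℝ F] (P : E →ₗ[ℝ] F) {C : Set E} (hC : Convex ℝ C) {x : E}
    (hx : x ∈ intrinsicInterior ℝ C) : P x ∈ intrinsicInterior ℝ (P '' C) := by
  apply relint_of_extend (hC.linear_image P) (Set.mem_image_of_mem _ (intrinsicInterior_subset hx))
  rintro _ ⟨y, hy, rfl⟩
  obtain ⟨ε, hε, h⟩ := relint_extend hx hy
  exact ⟨ε, hε, _, h, by simp⟩

theorem relint_pos (f : E →ₗ[ℝ] ℝ) {S : Set E} (hf : ∀ y ∈ S, 0 ≤ f y) {y : E} (hy : y ∈ S)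
    (hpos : 0 < f y) {x : E} (hx : x ∈ intrinsicInterior ℝ (convexHull ℝ S)) : 0 < f x := by
  obtain ⟨ε, hε, h⟩ := relint_extend hx (subset_convexHull ℝ S hy)
  have h2 : convexHull ℝ S ⊆ {z | 0 ≤ f z} :=
    convexHull_min hf (convex_halfSpace_ge f.isLinear 0)
  have h3 : 0 ≤ f (x + ε • (x - y)) := h2 h
  simp only [map_add, map_smul, map_sub, smul_eq_mul] at h3
  by_contra hc
  nlinarith [mul_pos hε hpos]

end RelInt

/-- Number of occurrences. -/
def cnt {V : Type*} [DecidableEq V] (l : List V) (x : V) : ℕ := l.count x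

theorem cnt_cons {V : Type*} [DecidableEq V] (a : V) (l : List V) (x : V) :
    cnt (a :: l) x = cnt l x + if a = x then 1 else 0 := by
  simp [cnt, List.count_cons]

theorem cnt_nil {V : Type*} [DecidableEq V] (x : V) : cnt [] x = 0 := by
  simp [cnt]

theorem cnt_append {V : Type*} [DecidableEq V] (l m : List V) (x : V) :
    cnt (l ++ m) x = cnt l x + cnt m x := by
  simp [cnt]

theorem cnt_eq_zero {V : Type*} [DecidableEq V] {l : List V} {x : V} (h : x ∉ l) :
    cnt l x = 0 := List.count_eq_zero.2 h

theorem cnt_pos {V : Type*} [DecidableEq V] {l : List V} {x : V} (h : x ∈ l) :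
    0 < cnt l x := List.count_pos_iff.2 h

theorem trace_eq {V : Type*} [DecidableEq V] {G : SimpleGraph V} {u v : V} (ω : G.Walk u v)
    (x : V) : trace ω x = (cnt ω.support x : ℝ) := rfl

theorem isProper_iff {V : Type*} [DecidableEq V] {G : SimpleGraph V} {u v : V} (ω : G.Walk u v) :
    IsProper ω ↔ cnt ω.support v = 1 := Iff.rfl

section Pendant

variable {V : Type*} (G : SimpleGraph V) (v : V)

@[simp] theorem ap_some_some (a b : V) :
    (attachPendant G v).Adj (some a) (some b) ↔ G.Adj a b := by
  simp only [attachPendant, SimpleGraph.fromRel_adj]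
  constructor
  · rintro ⟨_, (⟨x, y, h1, h2, h⟩ | h) | (⟨x, y, h1, h2, h⟩ | h)⟩
    · cases h1; cases h2; exact h
    · simp at h
    · cases h1; cases h2; exact h.symm
    · simp at h
  · intro h
    exact ⟨by simpa using h.ne, Or.inl (Or.inl ⟨a, b, rfl, rfl, h⟩)⟩

@[simp] theorem ap_none_some (a : V) :
    (attachPendant G v).Adj none (some a) ↔ a = v := by
  simp [attachPendant, SimpleGraph.fromRel_adj]

@[simp] theorem ap_some_none (a : V) :
    (attachPendant G v).Adj (some a) none ↔ a = v := by
  simp [attachPendant, SimpleGraph.fromRel_adj]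

@[simp] theorem ap_none_none : ¬ (attachPendant G v).Adj none none := by
  simp [attachPendant, SimpleGraph.fromRel_adj]

/-- The inclusion of `G`. -/
def apHom : G →g attachPendant G v where
  toFun := some
  map_rel' := by intro a b h; simpa using h

variable {G v}

theorem walk_project [DecidableEq V] {x y : Option V} (p : (attachPendant G v).Walk x y)
    (b : V) (hb : y = some b) :
    (∀ a, x = some a → ∃ q : G.Walk a b, ∀ w, cnt p.support (some w) =
        cnt q.support w + if w = v then cnt p.support none else 0) ∧
    (x = none → ∃ q : G.Walk v b, ∀ w, cnt p.support (some w) + (if w = v then 1 else 0) =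
        cnt q.support w + if w = v then cnt p.support none else 0) := by
  induction p with
  | nil =>
    subst hb
    refine ⟨?_, by simp⟩
    intro a ha
    cases ha
    refine ⟨SimpleGraph.Walk.nil, fun w => ?_⟩
    simp [cnt_cons, cnt_nil, eq_comm]
  | @cons x y z h p ih =>
    obtain ⟨ih1, ih2⟩ := ih hb
    constructor
    · rintro a rfl
      cases y with
      | some c =>
        obtain ⟨q, hq⟩ := ih1 c rfl
        refine ⟨SimpleGraph.Walk.cons (by simpa using h) q, fun w => ?_⟩
        have := hq w
        simp only [SimpleGraph.Walk.support_cons, cnt_cons,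
          Option.some.injEq, reduceCtorEq, if_false]
        split_ifs at * <;> omega
      | none =>
        obtain ⟨q, hq⟩ := ih2 rfl
        obtain rfl : a = v := by simpa using h
        refine ⟨q, fun w => ?_⟩
        have := hq w
        simp only [SimpleGraph.Walk.support_cons, cnt_cons,
          Option.some.injEq, reduceCtorEq, if_false, eq_comm (a := a)]
        split_ifs at * <;> omega
    · rintro rfl
      cases y with
      | none => simp at h
      | some c =>
        obtain rfl : c = v := by simpa using h
        obtain ⟨q, hq⟩ := ih1 c rfl
        refine ⟨q, fun w => ?_⟩
        have := hq w
        simp only [SimpleGraph.Walk.support_cons, cnt_cons,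
          reduceCtorEq, if_false, if_true]
        split_ifs at * <;> omega

/-- The projection. -/
def projP [DecidableEq V] (v : V) : (Option V → ℝ) →ₗ[ℝ] (V → ℝ) where
  toFun f := fun w => f (some w) - if w = v then f none else 0
  map_add' f g := by
    ext w; simp only [Pi.add_apply]; split_ifs <;> ring
  map_smul' c f := by
    ext w; simp only [Pi.smul_apply, smul_eq_mul, RingHom.id_apply]; split_ifs <;> ring

theorem cnt_map_some [DecidableEq V] (l : List V) (w : V) :
    cnt (l.map some) (some w) = cnt l w := by
  induction l with
  | nil => simp [cnt_nil]
  | cons a l ih => simp [cnt_cons, ih]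

theorem lift_walk {a b : V} (ω : G.Walk a b) :
    ∃ ω' : (attachPendant G v).Walk (some a) (some b), ω'.support = ω.support.map some :=
  ⟨ω.map (apHom G v), SimpleGraph.Walk.support_map _ _⟩

theorem lift_walk_induce {s : Set V} {a b : s} (ω : (G.induce s).Walk a b) :
    ∃ ω' : G.Walk a.1 b.1, ω'.support = ω.support.map Subtype.val :=
  ⟨ω.map (SimpleGraph.Embedding.induce s).toHom, SimpleGraph.Walk.support_map _ _⟩

theorem image_traceSet [DecidableEq V] {vin vout : V} (hv : v ≠ vout) :
    projP v '' traceSet (attachPendant G v) (some vin) (some vout) = traceSet G vin vout := by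
  ext f
  constructor
  · rintro ⟨_, ⟨ω, hω, rfl⟩, rfl⟩
    obtain ⟨q, hq⟩ := (walk_project ω vout rfl).1 vin rfl
    refine ⟨q, ?_, ?_⟩
    · have := hq vout
      rw [if_neg hv.symm] at this
      rw [isProper_iff] at *
      omega
    · ext w
      have := hq w
      simp only [projP, trace_eq, LinearMap.coe_mk, AddHom.coe_mk, this]
      split_ifs <;> simp
  · rintro ⟨ω, hω, rfl⟩
    obtain ⟨ω', h'⟩ := lift_walk (v := v) ω
    refine ⟨trace ω', ⟨ω', ?_, rfl⟩, ?_⟩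
    · rw [isProper_iff] at *
      rw [h', cnt_map_some, hω]
    · ext w
      have h2 : cnt (ω.support.map some) none = 0 := cnt_eq_zero (by simp)
      simp [projP, trace_eq, h', cnt_map_some, h2]

theorem exists_walks [DecidableEq V] (hG : G.Connected) {vin vout : V} (hne : vin ≠ vout)
    (hconn : (G.induce {x | x ≠ vout}).Connected) (hv : v ≠ vout) :
    ∃ (p : G.Walk vin v) (q : G.Walk v vout), cnt p.support vout = 0 ∧
      cnt q.support vout = 1 := by
  obtain ⟨p⟩ := hconn.preconnected ⟨vin, hne⟩ ⟨v, hv⟩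
  obtain ⟨q⟩ := hG.preconnected v vout
  obtain ⟨p', hp'⟩ := lift_walk_induce p
  refine ⟨p', q.toPath, ?_, ?_⟩
  · apply cnt_eq_zero
    rw [hp']
    simp
  · exact SimpleGraph.Path.count_support_eq_one (by simp)

theorem pos_G [DecidableEq V] (hG : G.Connected) {vin vout : V} (hne : vin ≠ vout)
    (hconn : (G.induce {x | x ≠ vout}).Connected) (hv : v ≠ vout) :
    ∃ f ∈ traceSet G vin vout, 0 < f v := by
  obtain ⟨p, q, hp, hq⟩ := exists_walks hG hne hconn hv
  refine ⟨_, ⟨p.append q, ?_, rfl⟩, ?_⟩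
  · rw [isProper_iff, SimpleGraph.Walk.support_append, cnt_append, hp]
    rw [← SimpleGraph.Walk.cons_tail_support, cnt_cons] at hq
    simpa [hv] using hq
  · rw [trace_eq, Nat.cast_pos]
    apply cnt_pos
    simp

theorem pos_G' [DecidableEq V] (hG : G.Connected) {vin vout : V} (hne : vin ≠ vout)
    (hconn : (G.induce {x | x ≠ vout}).Connected) (hv : v ≠ vout) :
    ∃ f ∈ traceSet (attachPendant G v) (some vin) (some vout), 0 < f none := by
  obtain ⟨p, q, hp, hq⟩ := exists_walks hG hne hconn hv
  obtain ⟨p', hp1⟩ := lift_walk (v := v) p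
  obtain ⟨q', hq1⟩ := lift_walk (v := v) q
  have hp' : cnt p'.support (some vout) = 0 := by rw [hp1, cnt_map_some, hp]
  have hq' : cnt q'.support (some vout) = 1 := by rw [hq1, cnt_map_some, hq]
  have a1 : (attachPendant G v).Adj (some v) none := by simp
  refine ⟨_, ⟨p'.append (.cons a1 (.cons a1.symm q')), ?_, rfl⟩, ?_⟩
  · rw [isProper_iff, SimpleGraph.Walk.support_append, cnt_append, hp']
    simpa [cnt_cons] using hq'
  · rw [trace_eq, Nat.cast_pos]
    apply cnt_pos
    simp

end Pendant

theorem mul_apply_ne {V : Type*} [Fintype V] [DecidableEq V] (G : SimpleGraph V) {vin vout : V}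
    (β r : V → ℝ) {x : V} (hx : x ≠ vout) :
    (Mmat G vin vout β).mulVec r x = ∑ w, if w = vout then (if x = vin then r vout else 0)
      else (if G.Adj x w then β x / (∑ u, if G.Adj u w then β u else 0) * r w else 0) := by
  unfold Matrix.mulVec dotProduct
  apply Finset.sum_congr rfl
  intro w _
  simp only [Mmat, Finset.sum_filter]
  by_cases hw : w = vout
  · subst hw
    by_cases h2 : x = vin <;> simp [hx, h2]
  · simp [hx, hw]

theorem mul_apply_out {V : Type*} [Fintype V] [DecidableEq V] (G : SimpleGraph V) {vin vout : V}
    (hne : vin ≠ vout) (β r : V → ℝ) :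
    (Mmat G vin vout β).mulVec r vout = r vout := by
  unfold Matrix.mulVec dotProduct
  rw [Finset.sum_eq_single vout]
  · simp [Mmat]
  · intro w _ hw
    simp [Mmat, hw]
  · simp

theorem solvable_extend {V : Type*} [Fintype V] [DecidableEq V]
    (G : SimpleGraph V) (hG : G.Connected) (vin vout : V) (hne : vin ≠ vout)
    (v : V) (hv : v ≠ vout) (α : ℝ) (r : V → ℝ) (hα : 0 < α) (hr : 0 < r v - α)
    (hs : Solvable G vin vout (fun w => r w - if w = v then α else 0)) :
    Solvable (attachPendant G v) (some vin) (some vout) (fun o => o.elim α r) := by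
  obtain ⟨β, hβ, hM, hout⟩ := hs
  set r₀ : V → ℝ := fun w => r w - if w = v then α else 0 with hr₀
  set S : V → ℝ := fun w => ∑ u, if G.Adj u w then β u else 0 with hS
  have hSv : 0 < S v := by
    obtain ⟨u, hu⟩ : ∃ u, G.Adj v u := by
      obtain ⟨p⟩ := hG.preconnected v vout
      cases p with
      | nil => exact absurd rfl hv
      | cons h _ => exact ⟨_, h⟩
    apply Finset.sum_pos' 
    · intro i _; split_ifs
      · exact (hβ i).le
      · exact le_rfl
    · exact ⟨u, Finset.mem_univ _, by simpa [hu.symm] using hβ u⟩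
  set b : ℝ := α * S v / (r v - α) with hb
  have hbpos : 0 < b := by positivity
  have houtr : r vout = 1 := by simpa [hr₀, hv.symm] using hout
  have hneS : S v + b ≠ 0 := by positivity
  have hneS2 : b + S v ≠ 0 := by positivity
  have hkey : r v / (b + S v) = (r v - α) / S v := by
    rw [div_eq_div_iff hneS2 hSv.ne', hb]
    field_simp
    ring
  have hkey2 : b / (b + S v) * r v = α := by
    rw [div_mul_eq_mul_div, mul_div_assoc, hkey, hb]
    field_simp
  refine ⟨fun o => o.elim b β, ?_, ?_, houtr⟩
  · rintro (_ | x)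
    · exact hbpos
    · exact hβ x
  · ext o
    by_cases ho : o = some vout
    · subst ho
      exact mul_apply_out _ (by simpa using hne) _ _
    rw [mul_apply_ne _ _ _ ho]
    cases o with
    | none =>
      rw [Fintype.sum_option]
      simp only [Fintype.sum_option, ap_none_none, ap_none_some, ap_some_some, Option.elim,
        reduceCtorEq, if_false, Option.some.injEq]
      rw [Finset.sum_eq_single v]
      · simpa [hv] using hkey2
      · intro w _ hw; simp [hw]
      · simp
    | some x =>
      have hx : x ≠ vout := by simpa using ho
      have h0 := congrFun hM x
      rw [mul_apply_ne _ _ _ hx] at h0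
      simp only [Fintype.sum_option, ap_none_none, ap_none_some, ap_some_none, ap_some_some,
        Option.elim, reduceCtorEq, if_false, Option.some.injEq, zero_add]
      have e1 : (∑ u, if u = v then β u else 0) = β v := by simp
      rw [e1]
      have e2 : r x = (if x = v then α else 0) + r₀ x := by simp [hr₀]
      rw [e2, ← h0]
      congr 1
      · split_ifs with h
        · subst h; rw [div_self (hβ x).ne', one_mul]
        · rfl
      · apply Finset.sum_congr rfl
        intro w _
        by_cases hw : w = vout
        · simp [hw, hr₀, hv.symm]
        · simp only [hw, if_false]
          split_ifs with h1 h2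
          · subst h2
            change β x / (b + S w) * r w = β x / S w * r₀ w
            have : r₀ w = r w - α := by simp [hr₀]
            rw [this, div_mul_eq_mul_div, mul_div_assoc, hkey]
            ring
          · simp [hr₀, h2]
          · rfl

/-- If `τ_ρ = r` is solvable on `G` for every `r ∈ Ψ(G)`, and `r' ∈ Ψ(G')` where `G'` is
obtained from `G` by attaching a pendant vertex to `v ≠ vout`, then `τ_{ρ'} = r'` is
solvable on `G'`. -/
theorem solvable_attachPendant_of_mem_Psi {V : Type*} [Fintype V] [DecidableEq V]
    (G : SimpleGraph V) (hG : G.Connected) (vin vout : V) (hne : vin ≠ vout)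
    (hconn : (G.induce {x | x ≠ vout}).Connected)
    (hsolvG : ∀ r ∈ Psi G vin vout, Solvable G vin vout r)
    (v : V) (hv : v ≠ vout) (α : ℝ) (r : V → ℝ)
    (h : (fun o => o.elim α r) ∈ Psi (attachPendant G v) (some vin) (some vout)) :
    Solvable (attachPendant G v) (some vin) (some vout) (fun o => o.elim α r) := by
  have hproj := relint_image (projP v) (convex_convexHull ℝ _) h
  rw [LinearMap.image_convexHull, image_traceSet hv] at hproj
  have heq : projP v (fun o => o.elim α r) = fun w => r w - if w = v then α else 0 := rfl
  rw [heq] at hproj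
  obtain ⟨f, hf, hfpos⟩ := pos_G' hG hne hconn hv
  have hα : 0 < α := relint_pos (LinearMap.proj none)
    (by rintro _ ⟨ω, _, rfl⟩; exact Nat.cast_nonneg _) hf hfpos h
  obtain ⟨g, hg, hgpos⟩ := pos_G hG hne hconn hv
  have hr := relint_pos (LinearMap.proj v)
    (by rintro _ ⟨ω, _, rfl⟩; exact Nat.cast_nonneg _) hg hgpos hproj
  have hr' : 0 < r v - α := by simpa using hr
  exact solvable_extend G hG vin vout hne v hv α r hα hr' (hsolvG _ hproj)

end
end

section
/- Let G = K_n be the complete graph on vertices v_1, v_2, …, v_n (n ≥ 3), with v_out = v_1 and v_in = v_2. Then for any r ∈ ℝ^n, the equation τ_ρ = r is solvable on G if and only if r ∈ Ψ(G). -/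
open scoped Classical

noncomputable section

theorem core_t {a δ s : ℝ} (ha : 0 < a) (hδ : 0 ≤ δ) (hs : 0 ≤ s) (hs1 : s < 1) :
    0 < 1 - δ * (s * (1 - s) / (a + δ * s)) ∧
    4 * (s * (1 - s) / (a + δ * s)) * a ≤ (1 - δ * (s * (1 - s) / (a + δ * s))) ^ 2 := by
  have hp : 0 < a + δ * s := by positivity
  set t := s * (1 - s) / (a + δ * s) with ht
  have h1 : t * (a + δ * s) = s * (1 - s) := by rw [ht]; field_simp
  constructor
  · have : 0 < (1 - δ * t) * (a + δ * s) := by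
      have : (1 - δ * t) * (a + δ * s) = a + δ * s ^ 2 := by linear_combination (-δ) * h1
      rw [this]; positivity
    exact pos_of_mul_pos_left this hp.le
  · nlinarith [sq_nonneg (1 - δ * t - 2 * s)]

theorem core_g {a δ t : ℝ} (ha : 0 < a) (hδ : 0 ≤ δ) (ht : 0 < t) (h1 : 0 < 1 - δ * t)
    (h2 : 4 * t * a ≤ (1 - δ * t) ^ 2) (g : ℝ)
    (hg : g = ((1 - δ * t) - √((1 - δ * t) ^ 2 - 4 * t * a)) / 2) :
    0 < g ∧ g * (1 - g) = t * (a + δ * g) ∧ t * a ≤ g := by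
  have hq := Real.sq_sqrt (sub_nonneg.2 h2)
  have hq0 := Real.sqrt_nonneg ((1 - δ * t) ^ 2 - 4 * t * a)
  set q := √((1 - δ * t) ^ 2 - 4 * t * a)
  have hta : 0 < t * a := by positivity
  have hqlt : q < 1 - δ * t := by
    apply lt_of_pow_lt_pow_left₀ 2 h1.le
    nlinarith
  have hgpos : 0 < g := by rw [hg]; linarith
  have hroot : g * (1 - g) = t * (a + δ * g) := by
    rw [hg]; linear_combination (-1 / 4) * hq
  refine ⟨hgpos, hroot, ?_⟩
  have : 0 ≤ t * δ * g := by positivity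
  nlinarith [sq_nonneg g]

theorem core {ι : Type*} [DecidableEq ι] (W : Finset ι) (hW : W.Nonempty) (a δ : ι → ℝ)
    (ha : ∀ v ∈ W, 0 < a v) (hδ : ∀ v ∈ W, 0 ≤ δ v)
    (h : ∀ v ∈ W, a v + δ v < 1 + ∑ w ∈ W.erase v, a w) :
    ∃ t : ℝ, 0 < t ∧ ∃ b : ι → ℝ,
      (∀ v ∈ W, 0 < b v ∧ b v * (1 - b v) = t * (a v + δ v * b v)) ∧ ∑ v ∈ W, b v + t = 1 := by
  let T : ι → Set ℝ := fun v => {t | 0 < 1 - δ v * t ∧ 4 * t * a v ≤ (1 - δ v * t) ^ 2}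
  have hlow : ∀ v ∈ W, IsLowerSet (T v) := by
    intro v hv t t' htt ⟨h1, h2⟩
    have h3 : δ v * t' ≤ δ v * t := mul_le_mul_of_nonneg_left htt (hδ v hv)
    have h4 : t' * a v ≤ t * a v := mul_le_mul_of_nonneg_right htt (ha v hv).le
    refine ⟨by linarith, ?_⟩
    have : (1 - δ v * t) ^ 2 ≤ (1 - δ v * t') ^ 2 := by
      apply pow_le_pow_left₀ h1.le; linarith
    nlinarith
  obtain ⟨x, hx, hmin⟩ := W.exists_minimalFor T hW
  have hsub : ∀ w ∈ W, T x ⊆ T w := by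
    intro w hw
    rcases (hlow x hx).total (hlow w hw) with h' | h'
    · exact h'
    · exact hmin hw h'
  have hax := ha x hx
  have hdx := hδ x hx
  let tf : ℝ → ℝ := fun s => s * (1 - s) / (a x + δ x * s)
  let g : ι → ℝ → ℝ := fun w t => ((1 - δ w * t) - √((1 - δ w * t) ^ 2 - 4 * t * a w)) / 2
  let H : ℝ → ℝ := fun s => s + tf s + ∑ w ∈ W.erase x, g w (tf s)
  have htf : ∀ s, 0 < s → s < 1 → 0 < tf s := by
    intro s h0 h1
    have : 0 < 1 - s := by linarith
    positivity
  have hgp : ∀ s, 0 < s → s < 1 → ∀ w ∈ W, 0 < g w (tf s) ∧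
      g w (tf s) * (1 - g w (tf s)) = tf s * (a w + δ w * g w (tf s)) ∧
      tf s * a w ≤ g w (tf s) := by
    intro s h0 h1 w hw
    have hm : tf s ∈ T w := hsub w hw (core_t hax hdx h0.le h1)
    exact core_g (ha w hw) (hδ w hw) (htf s h0 h1) hm.1 hm.2 _ rfl
  obtain ⟨L, hL⟩ : ∃ L, L = 1 + ∑ w ∈ W.erase x, a w := ⟨_, rfl⟩
  have hLx := h x hx
  rw [← hL] at hLx
  have hLd : 0 < L - δ x := by linarith
  obtain ⟨s0, hs0, hs01⟩ := exists_between (show a x / (L - δ x) < 1 by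
    rw [div_lt_one hLd]; linarith)
  have hs0p : 0 < s0 := lt_trans (by positivity) hs0
  have hH0 : H 0 = 0 := by simp [H, tf, g]
  have hH1 : 1 < H s0 := by
    have h1 : tf s0 * (L - 1) ≤ ∑ w ∈ W.erase x, g w (tf s0) := by
      rw [hL, add_sub_cancel_left, Finset.mul_sum]
      exact Finset.sum_le_sum fun w hw =>
        (hgp s0 hs0p hs01 w (Finset.mem_of_mem_erase hw)).2.2
    have h2 : 1 - s0 < tf s0 * L := by
      have h3 : a x < s0 * (L - δ x) := by rwa [div_lt_iff₀ hLd] at hs0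
      have h4 : 0 < a x + δ x * s0 := by positivity
      have h5 : 0 < 1 - s0 := by linarith
      change 1 - s0 < s0 * (1 - s0) / (a x + δ x * s0) * L
      rw [div_mul_eq_mul_div, lt_div_iff₀ h4]
      nlinarith
    change 1 < s0 + tf s0 + ∑ w ∈ W.erase x, g w (tf s0)
    linarith
  have htc : ContinuousOn tf (Set.Icc 0 s0) := by
    apply ContinuousOn.div (by fun_prop) (by fun_prop)
    intro s hs
    have := hs.1
    positivity
  have hHc : ContinuousOn H (Set.Icc 0 s0) := by
    apply ContinuousOn.add (by fun_prop)
    apply continuousOn_finsetSum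
    intro w _
    have : Continuous (g w) := by fun_prop
    exact this.comp_continuousOn htc
  obtain ⟨s, hs, hHs⟩ := intermediate_value_Icc hs0p.le hHc
    (show (1 : ℝ) ∈ Set.Icc (H 0) (H s0) from ⟨by rw [hH0]; norm_num, hH1.le⟩)
  have hs0' : 0 < s := by
    rcases hs.1.eq_or_lt with h' | h'
    · rw [← h', hH0] at hHs; norm_num at hHs
    · exact h'
  have hs1 : s < 1 := by linarith [hs.2]
  refine ⟨tf s, htf s hs0' hs1, fun w => if w = x then s else g w (tf s), ?_, ?_⟩
  · intro v hv
    by_cases hvx : v = x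
    · subst hvx
      simp only [if_true]
      refine ⟨hs0', ?_⟩
      have : a v + δ v * s ≠ 0 := by positivity
      change _ = s * (1 - s) / (a v + δ v * s) * _
      field_simp
    · simp only [hvx, if_false]
      exact ⟨(hgp s hs0' hs1 v hv).1, (hgp s hs0' hs1 v hv).2.1⟩
  · rw [← Finset.add_sum_erase W _ hx]
    have : ∑ w ∈ W.erase x, (if w = x then s else g w (tf s)) = ∑ w ∈ W.erase x, g w (tf s) :=
      Finset.sum_congr rfl fun w hw => by simp [Finset.ne_of_mem_erase hw]
    rw [this]
    simp only [if_true]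
    change s + tf s + ∑ w ∈ W.erase x, g w (tf s) = 1 at hHs
    linarith

/-- The strict inequalities describing `Ψ(K_n)`. -/
def InQ {V : Type*} [Fintype V] [DecidableEq V] (vin vout : V) (r : V → ℝ) : Prop :=
  ∀ v, v ≠ vout → 0 < r v - (if v = vin then 1 else 0) ∧
    2 * r v - (if v = vin then 1 else 0) < ∑ w ∈ Finset.univ.erase vout, r w

theorem nbr_sum {V : Type*} [Fintype V] [DecidableEq V] (β : V → ℝ) (w : V)
    [DecidablePred fun u => (⊤ : SimpleGraph V).Adj u w] :
    ∑ u ∈ Finset.univ.filter (fun u => (⊤ : SimpleGraph V).Adj u w), β u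
      = (∑ u, β u) - β w := by
  rw [← Finset.add_sum_erase Finset.univ β (Finset.mem_univ w), add_sub_cancel_left]
  apply Finset.sum_congr _ fun _ _ => rfl
  ext u
  simp

theorem mulVec_out {V : Type*} [Fintype V] [DecidableEq V] {vin vout : V} (hio : vin ≠ vout)
    (β r : V → ℝ) :
    (Mmat (⊤ : SimpleGraph V) vin vout β).mulVec r vout = r vout := by
  unfold Matrix.mulVec dotProduct
  rw [Finset.sum_eq_single vout]
  · simp [Mmat]
  · intro w _ hw
    simp [Mmat, hw]
  · simp

theorem mulVec_ne {V : Type*} [Fintype V] [DecidableEq V] {vin vout : V}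
    (β r : V → ℝ) (v : V) (hv : v ≠ vout) :
    (Mmat (⊤ : SimpleGraph V) vin vout β).mulVec r v =
      (if v = vin then 1 else 0) * r vout +
      ∑ w ∈ (Finset.univ.erase vout).erase v, β v / ((∑ u, β u) - β w) * r w := by
  change ∑ w, Mmat (⊤ : SimpleGraph V) vin vout β v w * r w = _
  rw [← Finset.add_sum_erase Finset.univ _ (Finset.mem_univ vout),
    ← Finset.add_sum_erase (Finset.univ.erase vout) _ (Finset.mem_erase.2 ⟨hv, Finset.mem_univ v⟩)]
  have h1 : (Mmat (⊤ : SimpleGraph V) vin vout β v v : ℝ) = 0 := by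
    simp [Mmat, hv]
  have h2 : Mmat (⊤ : SimpleGraph V) vin vout β v vout = if v = vin then 1 else 0 := by
    simp [Mmat, hv]
  beta_reduce
  rw [h1, h2, zero_mul, zero_add]
  congr 1
  apply Finset.sum_congr rfl
  intro w hw
  have hw1 : w ≠ v := Finset.ne_of_mem_erase hw
  have hw2 : w ≠ vout := Finset.ne_of_mem_erase (Finset.mem_of_mem_erase hw)
  unfold Mmat
  rw [nbr_sum, if_neg (by tauto), if_pos ⟨by simpa using hw1.symm, hv, hw2⟩]

theorem InQ_of_solvable {V : Type*} [Fintype V] [DecidableEq V] {vin vout z : V}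
    (hio : vin ≠ vout) (hz1 : z ≠ vin) (hz2 : z ≠ vout) (r : V → ℝ)
    (h : Solvable (⊤ : SimpleGraph V) vin vout r) : r vout = 1 ∧ InQ vin vout r := by
  obtain ⟨β, hβ, hM, hout⟩ := h
  refine ⟨hout, ?_⟩
  set B := ∑ u, β u with hB
  have heq : ∀ v, v ≠ vout → r v = (if v = vin then 1 else 0) +
      ∑ w ∈ (Finset.univ.erase vout).erase v, β v / (B - β w) * r w := by
    intro v hv
    have := mulVec_ne (vin := vin) β r v hv
    rw [hM, hout, mul_one] at this
    exact this
  have hsum : B = β vout + ∑ w ∈ Finset.univ.erase vout, β w :=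
    (Finset.add_sum_erase Finset.univ β (Finset.mem_univ vout)).symm
  have hsum2 : ∀ v, v ≠ vout →
      B = β vout + (β v + ∑ w ∈ (Finset.univ.erase vout).erase v, β w) := by
    intro v hv
    rw [hsum, ← Finset.add_sum_erase (Finset.univ.erase vout) β
      (Finset.mem_erase.2 ⟨hv, Finset.mem_univ v⟩)]
  have hBpos : ∀ w, w ≠ vout → 0 < B - β w := by
    intro w hw
    have h1 := hsum2 w hw
    have h2 : 0 ≤ ∑ w ∈ (Finset.univ.erase vout).erase w, β w :=
      Finset.sum_nonneg fun i _ => (hβ i).le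
    linarith [hβ vout]
  have hnn : ∀ v, v ≠ vout → 0 ≤ r v := by
    let f : V → ℝ := fun w => r w / (β w * (B - β w))
    obtain ⟨m, hm, hmin⟩ := Finset.exists_min_image (Finset.univ.erase vout) f
      ⟨vin, Finset.mem_erase.2 ⟨hio, Finset.mem_univ _⟩⟩
    have hm' : m ≠ vout := Finset.ne_of_mem_erase hm
    have hr : ∀ w, w ≠ vout → r w = f w * (β w * (B - β w)) := by
      intro w hw
      have h1 := (hBpos w hw).ne'
      have h2 := (hβ w).ne'
      simp only [f]
      field_simp
    have h1 : β m * (f m * ∑ w ∈ (Finset.univ.erase vout).erase m, β w) ≤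
        ∑ w ∈ (Finset.univ.erase vout).erase m, β m / (B - β w) * r w := by
      rw [Finset.mul_sum, Finset.mul_sum]
      apply Finset.sum_le_sum
      intro w hw
      have hw2 := Finset.mem_of_mem_erase hw
      have hw3 := Finset.ne_of_mem_erase hw2
      have : β m / (B - β w) * r w = β m * (f w * β w) := by
        rw [hr w hw3]
        have h1 := (hBpos w hw3).ne'
        field_simp
      rw [this]
      have := hmin w hw2
      have := hβ m
      have := hβ w
      gcongr
    have h2 := heq m hm'
    have h3 : (0 : ℝ) ≤ if m = vin then 1 else 0 := by split_ifs <;> norm_num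
    rw [hr m hm'] at h2
    have h4 : ∑ w ∈ (Finset.univ.erase vout).erase m, β w = B - β m - β vout := by
      linarith [hsum2 m hm']
    rw [h4] at h1
    have h5 : 0 ≤ f m * (β m * β vout) := by nlinarith
    have h6 : 0 ≤ f m := nonneg_of_mul_nonneg_left h5 (mul_pos (hβ m) (hβ vout))
    intro v hv
    rw [hr v hv]
    have h7 : 0 ≤ f v := h6.trans (hmin v (Finset.mem_erase.2 ⟨hv, Finset.mem_univ v⟩))
    have := hBpos v hv
    have := hβ v
    positivity
  have hterm : ∀ v w, w ≠ vout → 0 ≤ β v / (B - β w) * r w := by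
    intro v w hw
    have := hBpos w hw
    have := hβ v
    have := hnn w hw
    positivity
  have hge : ∀ v w, v ≠ vout → w ≠ vout → w ≠ v → 0 < r w →
      0 < r v - (if v = vin then 1 else 0) := by
    intro v w hv hw hwv hrw
    rw [heq v hv, add_sub_cancel_left]
    apply Finset.sum_pos'
    · intro u hu
      exact hterm v u (Finset.ne_of_mem_erase (Finset.mem_of_mem_erase hu))
    · refine ⟨w, by simp [hwv, hw], ?_⟩
      have := hBpos w hw
      have := hβ v
      positivity
  have hin : 0 < r vin := by
    rw [heq vin hio, if_pos rfl]
    have := Finset.sum_nonneg fun u (hu : u ∈ (Finset.univ.erase vout).erase vin) =>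
      hterm vin u (Finset.ne_of_mem_erase (Finset.mem_of_mem_erase hu))
    linarith
  have hne : ∀ v, v ≠ vout → v ≠ vin → 0 < r v := by
    intro v hv hv'
    have := hge v vin hv hio hv'.symm hin
    simpa [hv'] using this
  have hpos : ∀ v, v ≠ vout → 0 < r v := by
    intro v hv
    by_cases h : v = vin
    · rwa [h]
    · exact hne v hv h
  intro v hv
  obtain ⟨w, hw, hwv⟩ : ∃ w, w ≠ vout ∧ w ≠ v := by
    by_cases h : v = vin
    · exact ⟨z, hz2, h ▸ hz1⟩
    · exact ⟨vin, hio, Ne.symm h⟩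
  refine ⟨hge v w hv hw hwv (hpos w hw), ?_⟩
  have h1 : r v - (if v = vin then 1 else 0) <
      ∑ w ∈ (Finset.univ.erase vout).erase v, r w := by
    conv_lhs => rw [heq v hv, add_sub_cancel_left]
    apply Finset.sum_lt_sum_of_nonempty ⟨w, by simp [hwv, hw]⟩
    intro u hu
    have hu1 := Finset.ne_of_mem_erase hu
    have hu2 := Finset.ne_of_mem_erase (Finset.mem_of_mem_erase hu)
    have h2 := hBpos u hu2
    have h3 := hpos u hu2
    have h4 : β v < B - β u := by
      have h5 := hsum2 v hv
      have h6 : β u ≤ ∑ w ∈ (Finset.univ.erase vout).erase v, β w :=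
        Finset.single_le_sum (f := β) (fun i _ => (hβ i).le) hu
      linarith [hβ vout]
    have h5 : β v / (B - β u) < 1 := by rwa [div_lt_one h2]
    nlinarith
  rw [← Finset.add_sum_erase (Finset.univ.erase vout) r
    (Finset.mem_erase.2 ⟨hv, Finset.mem_univ v⟩)]
  linarith

theorem solvable_of_InQ {V : Type*} [Fintype V] [DecidableEq V] {vin vout : V}
    (hio : vin ≠ vout) (r : V → ℝ) (hout : r vout = 1) (hQ : InQ vin vout r) :
    Solvable (⊤ : SimpleGraph V) vin vout r := by
  set W := Finset.univ.erase vout with hW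
  have hinW : vin ∈ W := Finset.mem_erase.2 ⟨hio, Finset.mem_univ _⟩
  let δ : V → ℝ := fun v => if v = vin then 1 else 0
  have hδ : ∑ w ∈ W, δ w = 1 := by simp [δ, hinW]
  have hmemW : ∀ v, v ∈ W ↔ v ≠ vout := by simp [hW]
  obtain ⟨t, ht, b, hb, hbs⟩ := core W ⟨vin, hinW⟩ (fun v => r v - δ v) δ
    (fun v hv => (hQ v ((hmemW v).1 hv)).1)
    (fun v _ => by simp only [δ]; split_ifs <;> norm_num)
    (by
      intro v hv
      have h1 := (hQ v ((hmemW v).1 hv)).2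
      have h2 := Finset.add_sum_erase W (fun v => r v - δ v) hv
      rw [Finset.sum_sub_distrib (s := W), hδ] at h2
      change 2 * r v - δ v < _ at h1
      linarith)
  let β : V → ℝ := fun v => if v = vout then t else b v
  have hβb : ∀ v, v ≠ vout → β v = b v := fun v hv => by simp [β, hv]
  have hB : ∑ u, β u = 1 := by
    rw [← Finset.add_sum_erase Finset.univ β (Finset.mem_univ vout),
      Finset.sum_congr rfl fun v hv => hβb v ((hmemW v).1 hv)]
    simp only [β, if_true]
    linarith
  have hb1 : ∀ v ∈ W, 0 < 1 - b v := by
    intro v hv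
    have := Finset.single_le_sum (f := b) (fun i hi => (hb i hi).1.le) hv
    linarith
  refine ⟨β, ?_, ?_, hout⟩
  · intro v
    by_cases hv : v = vout
    · simpa [β, hv] using ht
    · rw [hβb v hv]; exact (hb v ((hmemW v).2 hv)).1
  · ext v
    by_cases hv : v = vout
    · rw [hv, mulVec_out hio]
    · rw [mulVec_ne β r v hv, hout, hB, mul_one]
      have hvW := (hmemW v).2 hv
      have h1 : ∑ w ∈ W.erase v, β v / (1 - β w) * r w =
          b v / t * ∑ w ∈ W.erase v, (b w + t * δ w) := by
        rw [Finset.mul_sum]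
        apply Finset.sum_congr rfl
        intro w hw
        have hwW := Finset.mem_of_mem_erase hw
        rw [hβb v hv, hβb w ((hmemW w).1 hwW)]
        have h2 := (hb w hwW).2
        have h3 := (hb1 w hwW).ne'
        field_simp
        linear_combination -b v * h2
      rw [h1]
      have h4 := Finset.add_sum_erase W (fun w => b w + t * δ w) hvW
      rw [Finset.sum_add_distrib (s := W), ← Finset.mul_sum, hδ] at h4
      have h5 : ∑ w ∈ W.erase v, (b w + t * δ w) = 1 - b v - t * δ v := by
        linarith
      rw [h5]
      have h2 := (hb v hvW).2
      change δ v + _ = _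
      field_simp
      linear_combination h2

theorem walk_bound {V : Type*} [Fintype V] [DecidableEq V] {G : SimpleGraph V} {x y : V}
    (ω : G.Walk x y) (v : V) :
    2 * trace ω v ≤ (∑ w, trace ω w) - 1 + (if v = x then 1 else 0) + (if v = y then 1 else 0) := by
  induction ω with
  | nil =>
    rename_i u
    have : ∀ w, trace (SimpleGraph.Walk.nil : G.Walk u u) w = if w = u then 1 else 0 := by
      intro w
      by_cases h : w = u
      · simp [trace, h]
      · simp [trace, h, List.count_singleton, Ne.symm h]
    simp only [this, Finset.sum_ite_eq', Finset.mem_univ, if_true]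
    linarith
  | cons h p ih =>
    rename_i x y z
    have : ∀ w, trace (SimpleGraph.Walk.cons h p) w = trace p w + if w = x then 1 else 0 := by
      intro w
      simp only [trace, SimpleGraph.Walk.support_cons, List.count_cons]
      by_cases hw : w = x
      · simp [hw]
      · simp [hw, Ne.symm hw]
    simp only [this, Finset.sum_add_distrib, Finset.sum_ite_eq', Finset.mem_univ, if_true]
    have hxy : (if v = x then (1 : ℝ) else 0) + (if v = y then 1 else 0) ≤ 1 := by
      have := h.ne
      split_ifs with h1 h2
      · exact absurd (h1.symm.trans h2) this
      all_goals norm_num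
    linarith

theorem trace_start {V : Type*} [DecidableEq V] {G : SimpleGraph V} {x y : V}
    (ω : G.Walk x y) (v : V) : (if v = x then 1 else 0) ≤ trace ω v := by
  split_ifs with h
  · subst h
    have : 1 ≤ ω.support.count v := List.one_le_count_iff.2 ω.start_mem_support
    simp only [trace]
    exact_mod_cast this
  · simp [trace]

theorem traceSet_base {V : Type*} [DecidableEq V] {x out : V} (h : x ≠ out) :
    (Pi.single x 1 + Pi.single out 1 : V → ℝ) ∈ traceSet (⊤ : SimpleGraph V) x out := by
  refine ⟨SimpleGraph.Walk.cons (by simpa using h) SimpleGraph.Walk.nil, ?_, ?_⟩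
  · simp [IsProper, List.count_cons, h]
  · ext w
    simp only [trace, SimpleGraph.Walk.support_cons, SimpleGraph.Walk.support_nil, List.count_cons,
      Pi.add_apply, Pi.single_apply]
    simp only [beq_iff_eq, List.count_nil, eq_comm (a := w)]
    push_cast
    ring

theorem traceSet_cons {V : Type*} [DecidableEq V] {x y out : V} (h : x ≠ out) (hxy : x ≠ y)
    {f : V → ℝ} (hf : f ∈ traceSet (⊤ : SimpleGraph V) y out) :
    Pi.single x 1 + f ∈ traceSet (⊤ : SimpleGraph V) x out := by
  obtain ⟨ω, h1, rfl⟩ := hf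
  refine ⟨SimpleGraph.Walk.cons (by simpa using hxy) ω, ?_, ?_⟩
  · simpa [IsProper, List.count_cons, h] using h1
  · ext w
    simp only [trace, SimpleGraph.Walk.support_cons, List.count_cons,
      Pi.add_apply, Pi.single_apply]
    simp only [beq_iff_eq, List.count_nil, eq_comm (a := w)]
    push_cast
    ring

theorem traceSet_cycle {V : Type*} [DecidableEq V] {x y out : V} (h : x ≠ out) (hy : y ≠ out)
    (hxy : x ≠ y) (N : ℕ) :
    ((N : ℝ) • (Pi.single x 1 + Pi.single y 1) + (Pi.single x 1 + Pi.single out 1) : V → ℝ)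
      ∈ traceSet (⊤ : SimpleGraph V) x out := by
  induction N with
  | zero => simpa using traceSet_base h
  | succ N ih =>
    have := traceSet_cons h hxy (traceSet_cons hy hxy.symm ih)
    convert this using 1
    push_cast
    module

theorem traceSet_out {V : Type*} [DecidableEq V] {G : SimpleGraph V} {x out : V} {f : V → ℝ}
    (hf : f ∈ traceSet G x out) : f out = 1 := by
  obtain ⟨ω, h, rfl⟩ := hf
  simp only [trace]
  rw [h]; norm_num

theorem traceSet_bound {V : Type*} [Fintype V] [DecidableEq V] {G : SimpleGraph V} {x out : V}
    {f : V → ℝ} (hf : f ∈ traceSet G x out) (v : V) (hv : v ≠ out) :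
    0 ≤ f v - (if v = x then 1 else 0) ∧
      2 * f v - (if v = x then 1 else 0) ≤ ∑ w ∈ Finset.univ.erase out, f w := by
  have ho := traceSet_out hf
  obtain ⟨ω, h, rfl⟩ := hf
  have h1 := walk_bound ω v
  have h2 := trace_start ω v
  rw [if_neg hv, ← Finset.add_sum_erase Finset.univ _ (Finset.mem_univ out), ho] at h1
  constructor <;> linarith

theorem relint_extend_s14 {V : Type*} [Fintype V] {K : Set (V → ℝ)} {r p : V → ℝ}
    (hr : r ∈ intrinsicInterior ℝ K) (hp : p ∈ K) :
    ∃ ε : ℝ, 0 < ε ∧ r + ε • (r - p) ∈ K := by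
  obtain ⟨y, hy, rfl⟩ := hr
  have hps := subset_affineSpan ℝ K hp
  have hmem : ∀ t : ℝ, (y : V → ℝ) + t • ((y : V → ℝ) - p) ∈ affineSpan ℝ K := by
    intro t
    have := AffineSubspace.smul_vsub_vadd_mem (affineSpan ℝ K) t y.2 hps y.2
    simpa [vsub_eq_sub, vadd_eq_add, add_comm] using this
  let φ : ℝ → affineSpan ℝ K := fun t => ⟨_, hmem t⟩
  have hφ : Continuous φ := by
    apply Continuous.subtype_mk
    fun_prop
  have h0 : φ 0 = y := by
    apply Subtype.ext
    simp [φ]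
  have hev : φ ⁻¹' (interior ((↑) ⁻¹' K)) ∈ nhds (0 : ℝ) := by
    apply hφ.continuousAt.preimage_mem_nhds
    rw [h0]
    exact isOpen_interior.mem_nhds hy
  obtain ⟨ε, hε, hball⟩ := Metric.mem_nhds_iff.1 hev
  refine ⟨ε / 2, by positivity, ?_⟩
  have : ε / 2 ∈ Metric.ball (0 : ℝ) ε := by
    rw [Metric.mem_ball, Real.dist_eq, sub_zero, abs_of_pos (by positivity)]
    linarith
  have hm := interior_subset (hball this)
  exact hm

theorem open_subset_of_subset_closure {E : Type*} [NormedAddCommGroup E] [NormedSpace ℝ E]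
    [FiniteDimensional ℝ E] {K U : Set E} (hK : Convex ℝ K) (hU : IsOpen U)
    (h : U ⊆ closure K) : U ⊆ interior K := by
  rcases U.eq_empty_or_nonempty with rfl | hne
  · exact Set.empty_subset _
  have hn : (interior K).Nonempty := by
    rw [hK.interior_nonempty_iff_affineSpan_eq_top, eq_top_iff, ← hU.affineSpan_eq_top hne]
    rw [affineSpan_le]
    refine h.trans (closure_minimal (subset_affineSpan ℝ K) ?_)
    exact AffineSubspace.closed_of_finiteDimensional _
  rw [← hK.interior_closure_eq_interior_of_nonempty_interior hn]
  exact interior_maximal h hU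

theorem InQ_of_mem_Psi {V : Type*} [Fintype V] [DecidableEq V] {vin vout z : V}
    (hio : vin ≠ vout) (hz1 : z ≠ vin) (hz2 : z ≠ vout) (r : V → ℝ)
    (h : r ∈ Psi (⊤ : SimpleGraph V) vin vout) : r vout = 1 ∧ InQ vin vout r := by
  unfold Psi at h
  set H := convexHull ℝ (traceSet (⊤ : SimpleGraph V) vin vout) with hH
  have hsub : traceSet (⊤ : SimpleGraph V) vin vout ⊆ H := subset_convexHull ℝ _
  have hout : ∀ f ∈ H, f vout = 1 := by
    have : H ⊆ {f : V → ℝ | f vout = 1} := by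
      apply convexHull_min
      · intro f hf; exact traceSet_out hf
      · exact convex_hyperplane (LinearMap.proj (R := ℝ) (φ := fun _ : V => ℝ) vout).isLinear 1
    exact this
  have h1 : ∀ v, v ≠ vout → ∀ f ∈ H, 0 ≤ f v - (if v = vin then 1 else 0) := by
    intro v hv
    have : H ⊆ {f : V → ℝ | (if v = vin then 1 else 0) ≤ f v} := by
      apply convexHull_min
      · intro f hf; exact sub_nonneg.1 (traceSet_bound hf v hv).1
      · exact convex_halfSpace_ge
          (LinearMap.proj (R := ℝ) (φ := fun _ : V => ℝ) v).isLinear _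
    intro f hf
    exact sub_nonneg.2 (this hf)
  have h2 : ∀ v, v ≠ vout → ∀ f ∈ H,
      2 * f v - (if v = vin then 1 else 0) ≤ ∑ w ∈ Finset.univ.erase vout, f w := by
    intro v hv
    have : H ⊆ {f : V → ℝ | 2 * f v - ∑ w ∈ Finset.univ.erase vout, f w
        ≤ (if v = vin then 1 else 0)} := by
      apply convexHull_min
      · intro f hf
        have := (traceSet_bound hf v hv).2
        simp only [Set.mem_ofPred_eq]
        linarith
      · apply convex_halfSpace_le
        constructor
        · intro f g
          simp only [Pi.add_apply, Finset.sum_add_distrib]; ring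
        · intro c f
          simp only [Pi.smul_apply, smul_eq_mul, ← Finset.mul_sum]; ring
    intro f hf
    have := this hf
    simp only [Set.mem_ofPred_eq] at this
    linarith
  refine ⟨hout r (intrinsicInterior_subset h), ?_⟩
  intro v hv
  constructor
  · obtain ⟨p, hp, hpv⟩ : ∃ p ∈ H, 0 < p v - (if v = vin then (1 : ℝ) else 0) := by
      by_cases hvi : v = vin
      · subst hvi
        refine ⟨_, hsub (traceSet_cycle hv hz2 hz1.symm 1), ?_⟩
        simp [Pi.single_apply, hv, hz1, hz1.symm]
      · refine ⟨_, hsub (traceSet_cons hio (Ne.symm hvi) (traceSet_base hv)), ?_⟩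
        simp [Pi.single_apply, hv, hvi]
    obtain ⟨ε, hε, hm⟩ := relint_extend_s14 h hp
    have := h1 v hv _ hm
    simp only [Pi.add_apply, Pi.smul_apply, Pi.sub_apply, smul_eq_mul] at this
    by_contra hcon
    push Not at hcon
    nlinarith
  · obtain ⟨p, hp, hpv⟩ : ∃ p ∈ H, 2 * p v - (if v = vin then (1 : ℝ) else 0) <
        ∑ w ∈ Finset.univ.erase vout, p w := by
      by_cases hvi : v = vin
      · subst hvi
        refine ⟨_, hsub (traceSet_cons hio hz1.symm (traceSet_base hz2)), ?_⟩
        simp [Pi.single_apply, hv, Finset.sum_add_distrib, hz2, hz1.symm]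
        norm_num
      · refine ⟨_, hsub (traceSet_base hio), ?_⟩
        simp [Pi.single_apply, hv, hvi, Finset.sum_add_distrib, hio]
    obtain ⟨ε, hε, hm⟩ := relint_extend_s14 h hp
    have := h2 v hv _ hm
    simp only [Pi.add_apply, Pi.smul_apply, Pi.sub_apply, smul_eq_mul, Finset.sum_add_distrib,
      ← Finset.mul_sum, Finset.sum_sub_distrib] at this
    by_contra hcon
    push Not at hcon
    nlinarith

theorem isOpen_InQ {V : Type*} [Fintype V] [DecidableEq V] (vin vout : V) :
    IsOpen {r : V → ℝ | InQ vin vout r} := by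
  have : {r : V → ℝ | InQ vin vout r} = ⋂ v : V, {r | v ≠ vout →
      0 < r v - (if v = vin then 1 else 0) ∧
      2 * r v - (if v = vin then 1 else 0) < ∑ w ∈ Finset.univ.erase vout, r w} := by
    ext r; simp [InQ]
  rw [this]
  apply isOpen_iInter_of_finite
  intro v
  by_cases hv : v = vout
  · simp [hv]
  · simp only [ne_eq, hv, not_false_eq_true, forall_true_left]
    apply IsOpen.and
    · exact isOpen_lt (by fun_prop) (by fun_prop)
    · exact isOpen_lt (by fun_prop) (by fun_prop)

/-- The cylinder over the convex hull. -/
def Cyl {V : Type*} [DecidableEq V] (vin vout : V) : Set (V → ℝ) :=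
  {f | ∃ g ∈ convexHull ℝ (traceSet (⊤ : SimpleGraph V) vin vout), ∃ c : ℝ,
    f = g + c • Pi.single vout 1}

theorem convex_Cyl {V : Type*} [DecidableEq V] (vin vout : V) : Convex ℝ (Cyl vin vout) := by
  rintro _ ⟨g, hg, c, rfl⟩ _ ⟨g', hg', c', rfl⟩ a b ha hb hab
  refine ⟨a • g + b • g', convex_convexHull ℝ _ hg hg' ha hb hab, a * c + b * c', ?_⟩
  module

theorem InQ_subset_closure {V : Type*} [Fintype V] [DecidableEq V] {vin vout : V}
    (hio : vin ≠ vout) (r : V → ℝ) (hQ : InQ vin vout r) : r ∈ closure (Cyl vin vout) := by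
  by_contra hcon
  obtain ⟨ℓ, u, hu, hK⟩ := geometric_hahn_banach_point_closed (convex_Cyl vin vout).closure
    isClosed_closure hcon
  have hT : ∀ f ∈ traceSet (⊤ : SimpleGraph V) vin vout, ∀ c : ℝ,
      u < ℓ f + c * ℓ (Pi.single vout 1) := by
    intro f hf c
    have := hK (f + c • Pi.single vout 1) (subset_closure ⟨f, subset_convexHull ℝ _ hf, c, rfl⟩)
    simpa using this
  let c : V → ℝ := fun v => ℓ (Pi.single v 1)
  have hbase := traceSet_base hio
  have hc0 : c vout = 0 := by
    by_contra hne
    have := hT _ hbase ((u - ℓ (Pi.single vin 1 + Pi.single vout 1)) / c vout)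
    change u < _ + _ / c vout * c vout at this
    rw [div_mul_cancel₀ _ hne] at this
    linarith
  have hT' : ∀ f ∈ traceSet (⊤ : SimpleGraph V) vin vout, ℓ r < ℓ f := by
    intro f hf
    have := hT f hf 0
    linarith
  have hlr : ℓ r = ∑ v ∈ Finset.univ.erase vout, r v * c v := by
    have : ℓ r = ∑ v, r v * c v := by
      conv_lhs => rw [pi_eq_sum_univ' r]
      rw [map_sum]
      apply Finset.sum_congr rfl
      intro v _
      rw [map_smul, smul_eq_mul]
    rw [this, ← Finset.add_sum_erase Finset.univ _ (Finset.mem_univ vout), hc0, mul_zero, zero_add]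
  have hlin : ℓ r < c vin := by
    have := hT' _ hbase
    rw [map_add] at this
    change ℓ r < c vin + c vout at this
    rwa [hc0, add_zero] at this
  have hpair : ∀ x y, x ≠ vout → y ≠ vout → x ≠ y → 0 ≤ c x + c y := by
    intro x y hx hy hxy
    by_contra! hneg
    obtain ⟨k, hk⟩ : ∃ k : ℝ, ∀ N : ℕ, ℓ r < N * (c x + c y) + k := by
      by_cases hxi : x = vin
      · subst hxi
        refine ⟨c x, fun N => ?_⟩
        have := hT' _ (traceSet_cycle hx hy hxy N)
        simp only [map_add, map_smul, smul_eq_mul] at this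
        change ℓ r < N * (c x + c y) + (c x + c vout) at this
        rwa [hc0, add_zero] at this
      · refine ⟨c vin + c x, fun N => ?_⟩
        have := hT' _ (traceSet_cons hio (Ne.symm hxi) (traceSet_cycle hx hy hxy N))
        simp only [map_add, map_smul, smul_eq_mul] at this
        change ℓ r < c vin + (N * (c x + c y) + (c x + c vout)) at this
        rw [hc0, add_zero] at this
        linarith
    obtain ⟨N, hN⟩ := exists_nat_gt ((ℓ r - k) / (c x + c y))
    have := hk N
    rw [div_lt_iff_of_neg hneg] at hN
    linarith
  set W := Finset.univ.erase vout with hW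
  have hmemW : ∀ v, v ∈ W ↔ v ≠ vout := by simp [hW]
  have hinW : vin ∈ W := (hmemW _).2 hio
  have hpos : ∀ v ∈ W, 0 < r v := by
    intro v hv
    have := (hQ v ((hmemW v).1 hv)).1
    split_ifs at this <;> linarith
  let δ : V → ℝ := fun v => if v = vin then 1 else 0
  have hδc : ∑ v ∈ W, δ v * c v = c vin := by simp [δ, hinW]
  have ha : ∀ v ∈ W, 0 < r v - δ v := fun v hv => (hQ v ((hmemW v).1 hv)).1
  by_cases hall : ∀ v ∈ W, 0 ≤ c v
  · have : ∑ v ∈ W, δ v * c v ≤ ∑ v ∈ W, r v * c v := by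
      apply Finset.sum_le_sum
      intro v hv
      exact mul_le_mul_of_nonneg_right (by linarith [ha v hv]) (hall v hv)
    linarith
  · push Not at hall
    obtain ⟨x, hx, hxneg⟩ := hall
    have hxo := (hmemW x).1 hx
    have hle : ∀ w ∈ W.erase x, -c x ≤ c w := by
      intro w hw
      have := hpair x w hxo ((hmemW w).1 (Finset.mem_of_mem_erase hw))
        (Finset.ne_of_mem_erase hw).symm
      linarith
    have hq := (hQ x hxo).2
    change 2 * r x - δ x < ∑ w ∈ W, r w at hq
    have hsr := Finset.add_sum_erase W r hx
    have hslr := Finset.add_sum_erase W (fun v => r v * c v) hx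
    by_cases hxi : x = vin
    · have h1 : ∑ w ∈ W.erase x, r w * (-c x) ≤ ∑ w ∈ W.erase x, r w * c w := by
        apply Finset.sum_le_sum
        intro w hw
        exact mul_le_mul_of_nonneg_left (hle w hw) (hpos w (Finset.mem_of_mem_erase hw)).le
      rw [← Finset.sum_mul] at h1
      have hd : δ x = 1 := by simp [δ, hxi]
      rw [hd] at hq
      rw [← hxi] at hlin
      nlinarith
    · have h0 : ℓ r < c vin + c x := by
        have := hT' _ (traceSet_cons hio (Ne.symm hxi) (traceSet_base hxo))
        rw [map_add, map_add] at this
        change ℓ r < c vin + (c x + c vout) at this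
        rwa [hc0, add_zero] at this
      have h1 : ∑ w ∈ W.erase x, (r w - δ w) * (-c x) ≤ ∑ w ∈ W.erase x, (r w - δ w) * c w := by
        apply Finset.sum_le_sum
        intro w hw
        exact mul_le_mul_of_nonneg_left (hle w hw) (ha w (Finset.mem_of_mem_erase hw)).le
      have hd : δ x = 0 := by simp [δ, hxi]
      have hs1 : ∑ w ∈ W.erase x, δ w = 1 := by
        simp [δ, hinW, Ne.symm hxi]
      have hs2 : ∑ w ∈ W.erase x, δ w * c w = c vin := by
        simp [δ, hinW, Ne.symm hxi]
      rw [← Finset.sum_mul, Finset.sum_sub_distrib, hs1] at h1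
      simp only [sub_mul, Finset.sum_sub_distrib] at h1
      rw [hs2] at h1
      rw [hd] at hq
      nlinarith

theorem mem_Psi_of_InQ {V : Type*} [Fintype V] [DecidableEq V] {vin vout : V}
    (hio : vin ≠ vout) (r : V → ℝ) (hout : r vout = 1) (hQ : InQ vin vout r) :
    r ∈ Psi (⊤ : SimpleGraph V) vin vout := by
  have hint := open_subset_of_subset_closure (convex_Cyl vin vout) (isOpen_InQ vin vout)
    (fun f hf => InQ_subset_closure hio f hf)
  unfold Psi
  set H := convexHull ℝ (traceSet (⊤ : SimpleGraph V) vin vout) with hH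
  have hHo : ∀ f ∈ H, f vout = 1 := by
    have : H ⊆ {f : V → ℝ | f vout = 1} := by
      apply convexHull_min
      · intro f hf; exact traceSet_out hf
      · exact convex_hyperplane (LinearMap.proj (R := ℝ) (φ := fun _ : V => ℝ) vout).isLinear 1
    exact this
  have hcyl : ∀ f, f vout = 1 → f ∈ Cyl vin vout → f ∈ H := by
    rintro _ h1 ⟨g, hg, c, rfl⟩
    have h2 := hHo g hg
    have : c = 0 := by
      simp [h2] at h1
      exact h1
    rw [this, zero_smul, add_zero]
    exact hg
  have hspan : ∀ f ∈ affineSpan ℝ H, f vout = 1 := by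
    intro f hf
    refine affineSpan_induction (p := fun f : V → ℝ => f vout = 1) hf hHo ?_
    intro c x y z hx hy hz
    simp [hx, hy, hz]
  have hrH : r ∈ H := hcyl r hout (interior_subset (hint hQ))
  refine ⟨⟨r, subset_affineSpan ℝ H hrH⟩, ?_, rfl⟩
  rw [mem_interior]
  refine ⟨(↑) ⁻¹' interior (Cyl vin vout), ?_, isOpen_interior.preimage continuous_subtype_val,
    hint hQ⟩
  intro y hy
  exact hcyl y (hspan y y.2) (interior_subset hy)

/-- For the complete graph `K_n` with `vout = v_1`, `vin = v_2`, the equation `τ_ρ = r`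
is solvable iff `r ∈ Ψ(G)`. -/
theorem solvable_iff_mem_Psi_completeGraph (n : ℕ) (hn : 3 ≤ n) (r : Fin n → ℝ) :
    Solvable (⊤ : SimpleGraph (Fin n)) ⟨1, by omega⟩ ⟨0, by omega⟩ r ↔
      r ∈ Psi (⊤ : SimpleGraph (Fin n)) ⟨1, by omega⟩ ⟨0, by omega⟩ := by
  have hio : (⟨1, by omega⟩ : Fin n) ≠ ⟨0, by omega⟩ := by simp
  have hz1 : (⟨2, by omega⟩ : Fin n) ≠ ⟨1, by omega⟩ := by simp
  have hz2 : (⟨2, by omega⟩ : Fin n) ≠ ⟨0, by omega⟩ := by simp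
  constructor
  · intro h
    obtain ⟨h1, h2⟩ := InQ_of_solvable hio hz1 hz2 r h
    exact mem_Psi_of_InQ hio r h1 h2
  · intro h
    obtain ⟨h1, h2⟩ := InQ_of_mem_Psi hio hz1 hz2 r h
    exact solvable_of_InQ hio r h1 h2

end
end
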